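/- arXiv:1801.06374 — 6 statements merged into one kernel-verified Lean document; each statement's English description precedes it below -/
import Mathlib

section
/- (Lemma 2, Property 3.) If f_i = 0 for some index i, then p_j = P̄_j for every index j < i and p_l = 0 for every index l > i. -/
/-- Lemma 2, Property 3: in the KKT setup with strictly decreasing `f`,
if `f i = 0` then `p j = Pbar j` for every `j < i` and `p l = 0` for every `l > i`. -/
theorem stmt_3 (N : ℕ) (f p Pbar lam ups : Fin N → ℝ)
    (hPbar : ∀ j, 0 < Pbar j)
    (hp : ∀ j, 0 ≤ p j ∧ p j ≤ Pbar j)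
    (hlam : ∀ j, 0 ≤ lam j) (hups : ∀ j, 0 ≤ ups j)
    (hstat : ∀ j, f j + lam j - ups j = 0)
    (hcs1 : ∀ j, lam j * p j = 0)
    (hcs2 : ∀ j, ups j * (Pbar j - p j) = 0)
    (hord : ∀ j k : Fin N, j < k → f k < f j)
    (i : Fin N) (hfi : f i = 0) :
    (∀ j : Fin N, j < i → p j = Pbar j) ∧ (∀ l : Fin N, i < l → p l = 0) := by
  refine ⟨fun j hj => ?_, fun l hl => ?_⟩
  · -- `f j > 0` forces `ups j > 0`, so the upper power bound is active.
    have hups_pos : 0 < ups j := by linarith [hord j i hj, hstat j, hlam j]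
    have hgap := (mul_eq_zero.mp (hcs2 j)).resolve_left hups_pos.ne'
    linarith
  · -- `f l < 0` forces `lam l > 0`, so the lower power bound is active.
    have hlam_pos : 0 < lam l := by linarith [hord i l hl, hstat l, hups l]
    exact (mul_eq_zero.mp (hcs1 l)).resolve_left hlam_pos.ne'
end

section
/- (Threshold structure of the optimal power allocation.) Under the KKT setup with strictly decreasing f_1 > f_2 > ⋯ > f_N, there exists an index i ∈ {1,…,N} such that p_j = P̄_j for every j < i and p_j = 0 for every j > i; that is, the power vector has the form (P̄_1,…,P̄_{i−1}, p_i, 0,…,0) with 0 ≤ p_i ≤ P̄_i. -/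
/-!
By stationarity and complementary slackness, `f j > 0` forces `ups j > 0`, hence
`p j = Pbar j`, and `f j < 0` forces `lam j > 0`, hence `p j = 0`. Since `f` is strictly
decreasing it changes sign at most once and vanishes at most once, so the first index where
`f` is nonpositive is the threshold.
-/

/-- Threshold structure of the optimal power allocation: in the KKT setup with
strictly decreasing `f`, there exists an index `i` such that `p j = Pbar j`
for every `j < i` and `p j = 0` for every `j > i`. -/
theorem stmt_4 (N : ℕ) (hN : 0 < N) (f p Pbar lam ups : Fin N → ℝ)
    (hPbar : ∀ j, 0 < Pbar j)
    (hp : ∀ j, 0 ≤ p j ∧ p j ≤ Pbar j)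
    (hlam : ∀ j, 0 ≤ lam j) (hups : ∀ j, 0 ≤ ups j)
    (hstat : ∀ j, f j + lam j - ups j = 0)
    (hcs1 : ∀ j, lam j * p j = 0)
    (hcs2 : ∀ j, ups j * (Pbar j - p j) = 0)
    (hord : ∀ j k : Fin N, j < k → f k < f j) :
    ∃ i : Fin N, (∀ j : Fin N, j < i → p j = Pbar j) ∧ (∀ j : Fin N, i < j → p j = 0) := by
  -- Stationarity and complementary slackness: the sign of `f j` decides `p j`.
  have hpos : ∀ j, 0 < f j → p j = Pbar j := by
    intro j hj
    have hu : ups j ≠ 0 := by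
      intro h
      linarith [hlam j, hstat j]
    linarith [(mul_eq_zero.mp (hcs2 j)).resolve_left hu]
  have hneg : ∀ j, f j < 0 → p j = 0 := by
    intro j hj
    have hl : lam j ≠ 0 := by
      intro h
      linarith [hups j, hstat j]
    exact (mul_eq_zero.mp (hcs1 j)).resolve_left hl
  -- The threshold is the first index with `f i ≤ 0`, or the last index if there is none.
  by_cases h : ∃ i, f i ≤ 0
  · obtain ⟨i, hi, hmin⟩ := WellFounded.has_min (wellFounded_lt (α := Fin N)) {i | f i ≤ 0} h
    refine ⟨i, fun j hj => hpos j ?_, fun j hj => hneg j ((hord i j hj).trans_le hi)⟩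
    by_contra hle
    exact hmin j (not_lt.mp hle) hj
  · push Not at h
    refine ⟨⟨N - 1, by omega⟩, fun j _ => hpos j (h j), fun j hj => ?_⟩
    have hlt : N - 1 < j.val := hj
    omega
end

section
/- (Interior case of the scalar energy-efficiency maximization, Lemma 3 of the proof of Proposition 1.) Suppose x* ≥ x_min satisfies the stationarity equation a(x* + c) = (a x* + b)·ln(a x* + b). Then x* globally maximizes g over the half-line: g(x*) ≥ g(x) for all x ≥ x_min. -/
/-- Interior case of the scalar energy-efficiency maximization (Lemma 3 of the
proof of Proposition 1): if `xstar ≥ xmin` satisfies the stationarity equation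
`a(xstar + c) = (a xstar + b) ln(a xstar + b)`, then `xstar` globally maximizes
`g(x) = ln(ax+b)/(x+c)` over `[xmin, ∞)`. -/
theorem stmt_11 (a b c xmin xstar : ℝ) (ha : 0 < a) (hc : 0 < c)
    (hxmin : 0 ≤ xmin) (hb : 1 ≤ a * xmin + b)
    (hx : xmin ≤ xstar)
    (hstat : a * (xstar + c) = (a * xstar + b) * Real.log (a * xstar + b)) :
    ∀ x : ℝ, xmin ≤ x →
      Real.log (a * x + b) / (x + c) ≤ Real.log (a * xstar + b) / (xstar + c) := by
  intro x hxx
  have hu : 0 < a * x + b := by nlinarith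
  have hv : 0 < a * xstar + b := by nlinarith
  have hxc : 0 < x + c := by linarith
  have hsc : 0 < xstar + c := by linarith
  -- Stationarity says that the maximal value is the slope of `ln(ax+b)` at `xstar`.
  have hval : Real.log (a * xstar + b) / (xstar + c) = a / (a * xstar + b) := by
    rw [div_eq_div_iff hsc.ne' hv.ne']
    linarith
  -- By concavity `ln(ax+b)` lies below its tangent at `xstar`, which by stationarity
  -- is the line `a(x+c)/(a xstar + b)` through `(-c, 0)`.
  have htan := Real.log_le_sub_one_of_pos (div_pos hu hv)
  rw [Real.log_div hu.ne' hv.ne'] at htan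
  have hline : a / (a * xstar + b) * (x + c)
      = Real.log (a * xstar + b) + ((a * x + b) / (a * xstar + b) - 1) := by
    field_simp
    linarith
  rw [hval, div_le_iff₀ hxc, hline]
  linarith
end

section
/- (Boundary case of the scalar energy-efficiency maximization.) If ac − b < −1, then g is strictly decreasing on [x_min, ∞), so g(x_min) ≥ g(x) for all x ≥ x_min; i.e., the maximizer of g over [x_min, ∞) is x_min. -/
/-!
Write `u = a x + b` and `v = a y + b` for `xmin ≤ x < y`. Since `a (x + c) = u - (b - a c)`, the
hypothesis `a c - b < -1` says exactly that `a (x + c) < u - 1`. The two standard bounds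
`log (v / u) ≤ v / u - 1` and `1 - 1 / u ≤ log u` then give
`u (log v - log u) a (x + c) ≤ (v - u) a (x + c) < (v - u) (u - 1) ≤ (v - u) u log u`,
which, as `v - u = a (y - x)`, is the cross-multiplied form of the desired strict inequality.
No derivative is needed.
-/

/-- Boundary case of the scalar energy-efficiency maximization: if
`ac - b < -1`, then `g(x) = ln(ax+b)/(x+c)` is strictly decreasing on
`[xmin, ∞)`, so the maximizer of `g` over `[xmin, ∞)` is `xmin`. -/
theorem stmt_12 (a b c xmin : ℝ) (ha : 0 < a) (hc : 0 < c)
    (hxmin : 0 ≤ xmin) (hb : 1 ≤ a * xmin + b)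
    (hcase : a * c - b < -1) :
    StrictAntiOn (fun x : ℝ => Real.log (a * x + b) / (x + c)) (Set.Ici xmin) ∧
    ∀ x : ℝ, xmin ≤ x →
      Real.log (a * x + b) / (x + c) ≤ Real.log (a * xmin + b) / (xmin + c) := by
  have hanti : StrictAntiOn (fun x : ℝ => Real.log (a * x + b) / (x + c)) (Set.Ici xmin) := by
    intro x hx y hy hxy
    have hx' : xmin ≤ x := hx
    have hxc : 0 < x + c := by linarith
    have hyc : 0 < y + c := by linarith
    have hax : a * xmin ≤ a * x := mul_le_mul_of_nonneg_left hx' ha.le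
    have haxy : a * x < a * y := mul_lt_mul_of_pos_left hxy ha
    change Real.log (a * y + b) / (y + c) < Real.log (a * x + b) / (x + c)
    rw [div_lt_div_iff₀ hyc hxc]
    have hu : 0 < a * x + b := by linarith
    have hv : 0 < a * y + b := by linarith
    have hlog_ratio : (a * x + b) * (Real.log (a * y + b) - Real.log (a * x + b))
        ≤ a * (y - x) := by
      have h := Real.log_le_sub_one_of_pos (div_pos hv hu)
      rw [Real.log_div hv.ne' hu.ne'] at h
      calc _ ≤ (a * x + b) * ((a * y + b) / (a * x + b) - 1) :=
            mul_le_mul_of_nonneg_left h hu.le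
        _ = a * (y - x) := by field_simp; ring
    have hlog_lower : a * x + b - 1 ≤ (a * x + b) * Real.log (a * x + b) := by
      have h := Real.one_sub_inv_le_log_of_pos hu
      calc a * x + b - 1 = (a * x + b) * (1 - (a * x + b)⁻¹) := by field_simp
        _ ≤ _ := mul_le_mul_of_nonneg_left h hu.le
    have hstrict : a * (x + c) < (a * x + b) * Real.log (a * x + b) := by linarith
    have h1 := mul_le_mul_of_nonneg_right hlog_ratio hxc.le
    have h2 := mul_lt_mul_of_pos_right hstrict (sub_pos.mpr hxy)
    -- Cancel the common positive factor `a * x + b`.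
    refine lt_of_mul_lt_mul_left ?_ hu.le
    linarith
  exact ⟨hanti, fun x hx => hanti.antitoneOn Set.self_mem_Ici hx hx⟩
end

section
/- (Core of Proposition 1: clipped stationary point is optimal on a compact interval.) Let x_max ≥ x_min and suppose x̃ ∈ ℝ satisfies a·x̃ + b ≥ 1 and the stationarity equation a(x̃ + c) = (a x̃ + b)·ln(a x̃ + b). Then x* = min(x_max, max(x_min, x̃)) maximizes g over [x_min, x_max]: g(x*) ≥ g(x) for all x ∈ [x_min, x_max]. -/
/-!
Write `Y = a y + b`. The sign of `g'(y)` is that of `a (y + c) - Y log Y`, which equals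
`(a c - b) - (Y log Y - Y)` and is therefore decreasing in `Y ≥ 1` and vanishes at `xt`
(`mul_log_sub_self_le`). The clipped point `y` thus satisfies the first-order optimality condition
`(x - y) (a (y + c) - Y log Y) ≤ 0` for every `x` in the interval. Since `log` lies below its
tangent line at `Y`, this condition already implies `g x ≤ g y` (`ratio_le_of_first_order`).
-/

/-- The function `u ↦ u log u - u` is monotone on `[1, ∞)`. -/
lemma mul_log_sub_self_le {t u : ℝ} (ht : 1 ≤ t) (htu : t ≤ u) :
    t * Real.log t - t ≤ u * Real.log u - u := by
  have hu : 0 < u := by linarith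
  have h1 : Real.log (t / u) ≤ t / u - 1 := Real.log_le_sub_one_of_pos (by positivity)
  rw [Real.log_div (by linarith) hu.ne'] at h1
  have h2 : u * (Real.log t - Real.log u) ≤ t - u := by
    calc u * (Real.log t - Real.log u) ≤ u * (t / u - 1) := by gcongr
      _ = t - u := by field_simp
  nlinarith [mul_nonneg (sub_nonneg.2 htu) (Real.log_nonneg ht)]

/-- The first-order condition at `y` in the direction of `x` is sufficient for `g x ≤ g y`. -/
lemma ratio_le_of_first_order {a b c x y : ℝ} (hx : 0 < x + c) (hy : 0 < y + c)
    (hX : 0 < a * x + b) (hY : 0 < a * y + b)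
    (h : (x - y) * (a * (y + c) - (a * y + b) * Real.log (a * y + b)) ≤ 0) :
    Real.log (a * x + b) / (x + c) ≤ Real.log (a * y + b) / (y + c) := by
  rw [div_le_div_iff₀ hx hy]
  have h1 : Real.log ((a * x + b) / (a * y + b)) ≤ (a * x + b) / (a * y + b) - 1 :=
    Real.log_le_sub_one_of_pos (by positivity)
  rw [Real.log_div hX.ne' hY.ne'] at h1
  have h2 : (a * y + b) * (Real.log (a * x + b) - Real.log (a * y + b)) ≤ a * (x - y) := by
    calc _ ≤ (a * y + b) * ((a * x + b) / (a * y + b) - 1) := by gcongr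
      _ = a * (x - y) := by field_simp; ring
  refine le_of_mul_le_mul_left ?_ hY
  linarith [mul_le_mul_of_nonneg_right h2 hy.le]

/-- Core of Proposition 1: clipped stationary point is optimal on a compact
interval. If `a·xt + b ≥ 1` and `a(xt + c) = (a xt + b) ln(a xt + b)`, then
`x* = min xmax (max xmin xt)` maximizes `g(x) = ln(ax+b)/(x+c)` over
`[xmin, xmax]`. -/
theorem stmt_13 (a b c xmin xmax xt : ℝ) (ha : 0 < a) (hc : 0 < c)
    (hxmin : 0 ≤ xmin) (hb : 1 ≤ a * xmin + b) (hmm : xmin ≤ xmax)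
    (hxt : 1 ≤ a * xt + b)
    (hstat : a * (xt + c) = (a * xt + b) * Real.log (a * xt + b)) :
    ∀ x ∈ Set.Icc xmin xmax,
      Real.log (a * x + b) / (x + c) ≤
        Real.log (a * min xmax (max xmin xt) + b) / (min xmax (max xmin xt) + c) := by
  rintro x ⟨hx1, hx2⟩
  have hpos : ∀ z, xmin ≤ z → 1 ≤ a * z + b := fun z hz => by
    linarith [mul_le_mul_of_nonneg_left hz ha.le]
  have key : ∀ y, xmin ≤ y →
      (x - y) * (a * (y + c) - (a * y + b) * Real.log (a * y + b)) ≤ 0 →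
      Real.log (a * x + b) / (x + c) ≤ Real.log (a * y + b) / (y + c) := fun y hy h =>
    ratio_le_of_first_order (by linarith) (by linarith) (by linarith [hpos x hx1])
      (by linarith [hpos y hy]) h
  rcases le_total xt xmin with h | h
  · rw [max_eq_left h, min_eq_right hmm]
    refine key _ le_rfl (mul_nonpos_of_nonneg_of_nonpos (by linarith) ?_)
    have := mul_log_sub_self_le hxt (u := a * xmin + b) (by gcongr)
    linarith
  · rw [max_eq_right h]
    rcases le_total xmax xt with h' | h'
    · rw [min_eq_left h']
      refine key _ hmm (mul_nonpos_of_nonpos_of_nonneg (by linarith) ?_)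
      have := mul_log_sub_self_le (hpos xmax hmm) (u := a * xt + b) (by gcongr)
      linarith
    · rw [min_eq_right h']
      refine key _ h ?_
      rw [hstat, sub_self, mul_zero]
end

section
/- (Optimal per-port transmit power in the multi-device case, equation (79).) Consider G(p) = (1/K)·ln(σ² + α(S + h p)) + D·p on the interval [0, P̄]. If D ≥ 0 then G is nondecreasing on [0, P̄] and p* = P̄ maximizes G over [0, P̄]. If D < 0 then p* = min(P̄, max(0, −1/(KD) − σ²/(hα) − S/h)) maximizes G over [0, P̄]; in both cases G(p*) ≥ G(p) for all p ∈ [0, P̄]. -/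
/-!
For `D ≥ 0` both summands of `G` are nondecreasing. For `D < 0`, put `x(p) = σ² + α(S + hp)`.
The inequality `log t ≤ t - 1` at `t = x(p) / x(q)` gives the concavity (tangent line) bound
`G(p) - G(q) ≤ (p - q) (αh / (K x(q)) + D)`. The unconstrained stationary point `c` satisfies
`K D x(c) = -αh`, so the slope at `q` equals `D α h (q - c) / x(q)`, and the bound is nonpositive
as soon as `(p - q) (q - c) ≥ 0`. This holds for every `p ∈ [0, P̄]` when `q` is the projection
`min P̄ (max 0 c)` of `c` onto `[0, P̄]`.
-/

/-- Variational characterization of the projection of `c` onto `[0, P]`. -/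
lemma proj_variational {P c p : ℝ} (hP : 0 < P) (hp : p ∈ Set.Icc (0 : ℝ) P) :
    0 ≤ (p - min P (max 0 c)) * (min P (max 0 c) - c) := by
  obtain ⟨h0, h1⟩ := hp
  rcases le_total c 0 with hc | hc
  · rw [max_eq_left hc, min_eq_right hP.le]
    exact mul_nonneg (by linarith) (by linarith)
  · rw [max_eq_right hc]
    rcases le_total P c with hPc | hPc
    · rw [min_eq_left hPc]
      exact mul_nonneg_of_nonpos_of_nonpos (by linarith) (by linarith)
    · rw [min_eq_right hPc]
      simp

/-- Optimal per-port transmit power in the multi-device case (equation (79)):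
for `G(p) = (1/K) ln(σ² + α(S + hp)) + Dp` on `[0, P̄]`, if `D ≥ 0` then `G` is
nondecreasing and maximized at `P̄`; if `D < 0` then
`p* = min P̄ (max 0 (-1/(KD) - σ²/(hα) - S/h))` maximizes `G` over `[0, P̄]`. -/
theorem stmt_17 (K σ2 h α S Pbar D : ℝ) (hK : 0 < K) (hσ2 : 0 < σ2) (hh : 0 < h)
    (hα0 : 0 < α) (hα1 : α ≤ 1) (hS : 0 ≤ S) (hP : 0 < Pbar) :
    (0 ≤ D →
      MonotoneOn (fun p : ℝ => (1 / K) * Real.log (σ2 + α * (S + h * p)) + D * p)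
        (Set.Icc 0 Pbar) ∧
      ∀ p ∈ Set.Icc (0 : ℝ) Pbar,
        (1 / K) * Real.log (σ2 + α * (S + h * p)) + D * p ≤
          (1 / K) * Real.log (σ2 + α * (S + h * Pbar)) + D * Pbar) ∧
    (D < 0 →
      ∀ p ∈ Set.Icc (0 : ℝ) Pbar,
        (1 / K) * Real.log (σ2 + α * (S + h * p)) + D * p ≤
          (1 / K) * Real.log (σ2 + α * (S + h *
              min Pbar (max 0 (-1 / (K * D) - σ2 / (h * α) - S / h)))) +
            D * min Pbar (max 0 (-1 / (K * D) - σ2 / (h * α) - S / h))) := by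
  have hpos : ∀ p : ℝ, 0 ≤ p → 0 < σ2 + α * (S + h * p) := fun p hp => by positivity
  constructor
  · intro hD
    have hmono : MonotoneOn
        (fun p : ℝ => (1 / K) * Real.log (σ2 + α * (S + h * p)) + D * p)
        (Set.Icc 0 Pbar) := by
      intro a ha b _ hab
      have hxa := hpos a ha.1
      dsimp only
      gcongr
    exact ⟨hmono, fun p hp => hmono hp (Set.right_mem_Icc.2 hP.le) hp.2⟩
  · intro hD p hp
    have hproj := proj_variational (c := -1 / (K * D) - σ2 / (h * α) - S / h) hP hp
    set c := -1 / (K * D) - σ2 / (h * α) - S / h with hc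
    have hq0 : 0 ≤ min Pbar (max 0 c) := le_min hP.le (le_max_left _ _)
    set q := min Pbar (max 0 c)
    have hxp := hpos p hp.1
    have hxq := hpos q hq0
    have hstat : K * D * (σ2 + α * (S + h * c)) = -(α * h) := by
      have hD' := hD.ne
      rw [hc]
      field_simp
      ring
    have hlog := Real.log_le_sub_one_of_pos (div_pos hxp hxq)
    rw [Real.log_div hxp.ne' hxq.ne'] at hlog
    have hslope : (1 / K) * ((σ2 + α * (S + h * p)) / (σ2 + α * (S + h * q)) - 1) + D * (p - q)
        = D * (α * h) * ((p - q) * (q - c)) / (σ2 + α * (S + h * q)) := by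
      field_simp
      linear_combination (p - q) * hstat
    have hle : D * (α * h) * ((p - q) * (q - c)) / (σ2 + α * (S + h * q)) ≤ 0 :=
      div_nonpos_of_nonpos_of_nonneg
        (mul_nonpos_of_nonpos_of_nonneg
          (mul_nonpos_of_nonpos_of_nonneg hD.le (by positivity)) hproj) hxq.le
    have hscaled := mul_le_mul_of_nonneg_left hlog (one_div_pos.2 hK).le
    linarith
end
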